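/- arXiv:2209.05823 — 9 statements merged into one kernel-verified Lean document; each statement's English description precedes it below -/
import Mathlib

section
/- Let σ: S ↷ G be an algebraic action. Then the family 𝒞 of S-constructible subgroups satisfies: (i) 𝒞 is closed under finite intersections; (ii) if C ∈ 𝒞 and s ∈ S, then σ_s(C) ∈ 𝒞 and σ_s⁻¹(C) ∈ 𝒞; (iii) for all s ∈ S, g ∈ G and C ∈ 𝒞, the preimage σ_s⁻¹(gC) = {h ∈ G : σ_s(h) ∈ gC} is either empty or equal to h·σ_s⁻¹(C) for every h ∈ σ_s⁻¹(gC). -/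
open scoped Pointwise

/-- The family of `S`-constructible subgroups of `G` for an algebraic action
`σ : S ↷ G`: the smallest family of subgroups containing `G` and closed under
images and preimages of the endomorphisms `σ_s`. -/
inductive IsConstructible {S G : Type*} [Monoid S] [Group G]
    (σ : S →* Monoid.End G) : Subgroup G → Prop
  | top : IsConstructible σ ⊤
  | map : ∀ (s : S) (C : Subgroup G), IsConstructible σ C →
      IsConstructible σ (Subgroup.map (σ s) C)
  | comap : ∀ (s : S) (C : Subgroup G), IsConstructible σ C →
      IsConstructible σ (Subgroup.comap (σ s) C)

/-!
To intersect `C` with `D`, strip from `D` the last image or preimage under `σ_s` used to construct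
it, and apply the opposite operation to `C`, which stays in the family.
-/

section

variable {G N : Type*} [Group G] [Group N]

theorem map_comap_inf_eq_inf_map (f : G →* N) (H : Subgroup N) (K : Subgroup G) :
    Subgroup.map f (Subgroup.comap f H ⊓ K) = H ⊓ Subgroup.map f K :=
  SetLike.coe_injective (Set.image_preimage_inter f K H)

theorem comap_map_inf_eq_inf_comap {f : G →* N} (hf : Function.Injective f)
    (H : Subgroup G) (K : Subgroup N) :
    Subgroup.comap f (Subgroup.map f H ⊓ K) = H ⊓ Subgroup.comap f K := by
  rw [Subgroup.comap_inf, Subgroup.comap_map_eq_self_of_injective hf]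

theorem preimage_map_smul_eq_smul_preimage (f : G →* N) (h : G) (t : Set N) :
    f ⁻¹' (f h • t) = h • f ⁻¹' t :=
  Group.preimage_smul_setₛₗ f (⟨f, map_mul f⟩ : G →ₑ[f] N) h t

theorem preimage_leftCoset_eq_smul_preimage (f : G →* N) {g : N} {C : Subgroup N} {h : G}
    (hh : h ∈ f ⁻¹' (g • (C : Set N))) :
    f ⁻¹' (g • (C : Set N)) = h • f ⁻¹' (C : Set N) := by
  have coset_eq : g • (C : Set N) = f h • (C : Set N) :=
    (leftCoset_eq_iff C).2 ((mem_leftCoset_iff g).1 hh)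
  rw [coset_eq, preimage_map_smul_eq_smul_preimage]

end

theorem IsConstructible.inf {S G : Type*} [Monoid S] [Group G] {σ : S →* Monoid.End G}
    (hinj : ∀ s : S, Function.Injective (σ s)) {C D : Subgroup G}
    (hC : IsConstructible σ C) (hD : IsConstructible σ D) : IsConstructible σ (C ⊓ D) := by
  induction hD generalizing C with
  | top => rwa [inf_top_eq]
  | map s D _ ih =>
    rw [← map_comap_inf_eq_inf_map (σ s) C D]
    exact .map s _ (ih (.comap s C hC))
  | comap s D _ ih =>
    rw [← comap_map_inf_eq_inf_comap (hinj s)]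
    exact .comap s _ (ih (.map s C hC))

theorem constructible_subgroups_props_general {S G : Type*} [Monoid S] [Group G]
    (σ : S →* Monoid.End G) (hinj : ∀ s : S, Function.Injective (σ s)) :
    (∀ C D : Subgroup G, IsConstructible σ C → IsConstructible σ D →
        IsConstructible σ (C ⊓ D)) ∧
    (∀ (C : Subgroup G) (s : S), IsConstructible σ C →
        IsConstructible σ (Subgroup.map (σ s) C) ∧
        IsConstructible σ (Subgroup.comap (σ s) C)) ∧
    (∀ (s : S) (g : G) (C : Subgroup G),
        ∀ h ∈ (σ s : G → G) ⁻¹' (g • (C : Set G)),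
          (σ s : G → G) ⁻¹' (g • (C : Set G)) = h • ((σ s : G → G) ⁻¹' (C : Set G))) :=
  ⟨fun _ _ hC hD => hC.inf hinj hD,
    fun C s hC => ⟨.map s C hC, .comap s C hC⟩,
    fun s _ _ _ hh => preimage_leftCoset_eq_smul_preimage (σ s) hh⟩

/-- Proposition 2.8 (prop:C): properties of the family of S-constructible subgroups. -/
theorem constructible_subgroups_props {S G : Type*} [Monoid S] [Group G] [Nontrivial G]
    (σ : S →* Monoid.End G)
    (hinj : ∀ s : S, Function.Injective (σ s))
    (hfaith : Function.Injective σ) :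
    -- (i) closed under finite intersections
    (∀ C D : Subgroup G, IsConstructible σ C → IsConstructible σ D →
        IsConstructible σ (C ⊓ D)) ∧
    -- (ii) closed under images and preimages under the σ_s
    (∀ (C : Subgroup G) (s : S), IsConstructible σ C →
        IsConstructible σ (Subgroup.map (σ s) C) ∧
        IsConstructible σ (Subgroup.comap (σ s) C)) ∧
    -- (iii) the preimage of a coset gC is empty or a coset h·σ_s⁻¹(C) for any h in it
    (∀ (s : S) (g : G) (C : Subgroup G), IsConstructible σ C →
        ∀ h ∈ (σ s : G → G) ⁻¹' (g • (C : Set G)),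
          (σ s : G → G) ⁻¹' (g • (C : Set G)) = h • ((σ s : G → G) ⁻¹' (C : Set G))) := by
  obtain ⟨inf, map_comap, coset⟩ := constructible_subgroups_props_general σ hinj
  exact ⟨inf, map_comap, fun s g C _ => coset s g C⟩
end

section
/- If σ: S ↷ G is a non-automorphic algebraic action, then the idempotent elements of I (the φ ∈ I with φ ∘ φ = φ, equivalently the elements of I that are restrictions of the identity map of G) are exactly the identity maps id_{gC} on the S-constructible cosets gC (g ∈ G, C ∈ 𝒞) together with the empty partial bijection; that is, the idempotent semilattice of I is ℰ = {gC : g ∈ G, C ∈ 𝒞} ∪ {∅}. -/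
open scoped Pointwise

/- We model partial bijections of `G` by their graphs, i.e. subsets of `G × G`
that are graphs of injective partial functions; equality of graphs is exactly
equality of partial bijections. -/

/-- Graph of an everywhere-defined function. -/
def grph {G : Type*} (f : G → G) : Set (G × G) := {p | p.2 = f p.1}

/-- Composition `φ ∘ ψ` of partial bijections (apply `ψ` first), as graphs. -/
def rcomp {G : Type*} (φ ψ : Set (G × G)) : Set (G × G) :=
  {p | ∃ y, (p.1, y) ∈ ψ ∧ (y, p.2) ∈ φ}

/-- Inverse of a partial bijection, as graphs. -/
def rinv {G : Type*} (φ : Set (G × G)) : Set (G × G) := {p | (p.2, p.1) ∈ φ}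

/-- Domain of a partial bijection. -/
def rdom {G : Type*} (φ : Set (G × G)) : Set G := {x | ∃ y, (x, y) ∈ φ}

/-- The identity map on a subset `A ⊆ G`, as a graph. -/
def idOn {G : Type*} (A : Set G) : Set (G × G) := {p | p.1 = p.2 ∧ p.1 ∈ A}

/-- Membership in the inverse semigroup of partial bijections generated by a
set of generators: closure under composition and inversion. -/
inductive MemInvSemigroup {G : Type*} (gens : Set (Set (G × G))) : Set (G × G) → Prop
  | base : ∀ φ ∈ gens, MemInvSemigroup gens φ
  | comp : ∀ φ ψ, MemInvSemigroup gens φ → MemInvSemigroup gens ψ →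
      MemInvSemigroup gens (rcomp φ ψ)
  | inv : ∀ φ, MemInvSemigroup gens φ → MemInvSemigroup gens (rinv φ)

/-- The inverse semigroup `I` generated by the endomorphisms `σ_s` and the left
translations `t_g`. -/
def memI {S G : Type*} [Monoid S] [Group G] (σ : S →* Monoid.End G) :
    Set (G × G) → Prop :=
  MemInvSemigroup ({φ | ∃ s : S, φ = grph (σ s : G → G)} ∪
    {φ | ∃ g : G, φ = grph (fun h : G => g * h)})

/-!
Every element of `I` carries constructible cosets to constructible cosets or to `∅`, under images
and preimages alike, because the generators do; so its domain is one of these sets. An idempotent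
partial bijection is the identity on its domain.

Conversely, conjugating `id_A` by a partial bijection `φ` gives the identity on `φ(A)`, so the
recursive description of the constructible cosets reproduces their identity maps inside `I`. If
`g ∉ σ_s(G)`, the cosets `σ_s(G)` and `g σ_s(G)` are disjoint and the product of their identity
maps is the empty partial bijection.
-/

section PartialBijection

variable {G : Type*} {φ ψ : Set (G × G)}

/-- The graph `φ` is that of a partial bijection: it is single-valued and injective. -/
def IsPartialBijection (φ : Set (G × G)) : Prop :=
  Relator.BiUnique fun x y => (x, y) ∈ φ

theorem grph_eq_graph (f : G → G) : grph f = f.graph :=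
  Set.ext fun _ => eq_comm

theorem image_grph (f : G → G) (A : Set G) : SetRel.image (grph f) A = f '' A := by
  rw [grph_eq_graph, Set.image_eq]

theorem preimage_grph (f : G → G) (A : Set G) : SetRel.preimage (grph f) A = f ⁻¹' A := by
  rw [grph_eq_graph, Set.preimage_eq]

theorem isPartialBijection_grph {f : G → G} (hf : Function.Injective f) :
    IsPartialBijection (grph f) :=
  ⟨fun _ _ _ hx hy => hf (hx.symm.trans hy), fun _ _ _ hy hz => hy.trans hz.symm⟩

theorem IsPartialBijection.inv (hφ : IsPartialBijection φ) : IsPartialBijection (rinv φ) :=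
  ⟨fun _ _ _ hx hy => hφ.2 hx hy, fun _ _ _ hy hz => hφ.1 hy hz⟩

theorem IsPartialBijection.comp (hφ : IsPartialBijection φ) (hψ : IsPartialBijection ψ) :
    IsPartialBijection (rcomp φ ψ) := by
  constructor
  · rintro x x' z ⟨y, hxy, hyz⟩ ⟨y', hxy', hyz'⟩
    obtain rfl : y = y' := hφ.1 hyz hyz'
    exact hψ.1 hxy hxy'
  · rintro x z z' ⟨y, hxy, hyz⟩ ⟨y', hxy', hyz'⟩
    obtain rfl : y = y' := hψ.2 hxy hxy'
    exact hφ.2 hyz hyz'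

theorem mk_mem_idOn {A : Set G} {x y : G} : (x, y) ∈ idOn A ↔ x = y ∧ x ∈ A :=
  .rfl

theorem mk_mem_rcomp {x z : G} : (x, z) ∈ rcomp φ ψ ↔ ∃ y, (x, y) ∈ ψ ∧ (y, z) ∈ φ :=
  .rfl

theorem idOn_empty : idOn (∅ : Set G) = ∅ := by
  simp [idOn]

theorem idOn_univ : idOn (Set.univ : Set G) = grph id := by
  ext ⟨x, y⟩
  simp [idOn, grph, eq_comm]

theorem rcomp_empty (φ : Set (G × G)) : rcomp φ ∅ = ∅ :=
  SetRel.empty_comp φ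

theorem rcomp_idOn_idOn (A B : Set G) : rcomp (idOn A) (idOn B) = idOn (A ∩ B) := by
  ext ⟨x, y⟩
  simp only [mk_mem_rcomp, mk_mem_idOn]
  constructor
  · rintro ⟨_, ⟨rfl, hB⟩, rfl, hA⟩
    exact ⟨rfl, hA, hB⟩
  · rintro ⟨rfl, hA, hB⟩
    exact ⟨x, ⟨rfl, hB⟩, rfl, hA⟩

theorem rcomp_idOn_rinv (hφ : Relator.RightUnique fun x y => (x, y) ∈ φ) (A : Set G) :
    rcomp φ (rcomp (idOn A) (rinv φ)) = idOn (SetRel.image φ A) := by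
  ext ⟨x, y⟩
  simp only [mk_mem_rcomp, mk_mem_idOn]
  constructor
  · rintro ⟨_, ⟨a, hax, rfl, ha⟩, hay⟩
    exact ⟨hφ hax hay, a, ha, hax⟩
  · rintro ⟨rfl, a, ha, hax⟩
    exact ⟨a, ⟨a, hax, rfl, ha⟩, hax⟩

theorem IsPartialBijection.eq_idOn_rdom (hφ : IsPartialBijection φ)
    (hidem : rcomp φ φ = φ) : φ = idOn (rdom φ) := by
  have fixes : ∀ {x y}, (x, y) ∈ φ → x = y := by
    intro x y hxy
    obtain ⟨z, hxz, hzy⟩ := hidem.symm.subset hxy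
    obtain rfl : y = z := hφ.2 hxy hxz
    exact hφ.1 hxy hzy
  ext ⟨x, y⟩
  rw [mk_mem_idOn]
  constructor
  · exact fun hxy => ⟨fixes hxy, y, hxy⟩
  · rintro ⟨rfl, z, hxz⟩
    obtain rfl : x = z := fixes hxz
    exact hxz

end PartialBijection

namespace MemInvSemigroup

variable {G : Type*} {gens : Set (Set (G × G))} {φ : Set (G × G)}

theorem isPartialBijection (hgens : ∀ ψ ∈ gens, IsPartialBijection ψ)
    (hφ : MemInvSemigroup gens φ) : IsPartialBijection φ := by
  induction hφ with
  | base φ hφ => exact hgens φ hφ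
  | comp φ ψ _ _ ihφ ihψ => exact ihφ.comp ihψ
  | inv φ _ ih => exact ih.inv

theorem mapsTo_image_and_preimage {E : Set (Set G)}
    (hgens : ∀ ψ ∈ gens, Set.MapsTo (SetRel.image ψ) E E ∧ Set.MapsTo (SetRel.preimage ψ) E E)
    (hφ : MemInvSemigroup gens φ) :
    Set.MapsTo (SetRel.image φ) E E ∧ Set.MapsTo (SetRel.preimage φ) E E := by
  induction hφ with
  | base φ hφ => exact hgens φ hφ
  | comp φ ψ _ _ ihφ ihψ =>
    refine ⟨fun A hA => ?_, fun A hA => ?_⟩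
    · exact (SetRel.image_comp ψ φ A).symm ▸ ihφ.1 (ihψ.1 hA)
    · exact (SetRel.preimage_comp ψ φ A).symm ▸ ihψ.2 (ihφ.2 hA)
  | inv φ _ ih => exact ih.symm

theorem idOn_image (hgens : ∀ ψ ∈ gens, IsPartialBijection ψ) (hφ : MemInvSemigroup gens φ)
    {A : Set G} (hA : MemInvSemigroup gens (idOn A)) :
    MemInvSemigroup gens (idOn (SetRel.image φ A)) :=
  rcomp_idOn_rinv (hφ.isPartialBijection hgens).2 A ▸ .comp _ _ hφ (.comp _ _ hA (.inv _ hφ))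

theorem idOn_preimage (hgens : ∀ ψ ∈ gens, IsPartialBijection ψ) (hφ : MemInvSemigroup gens φ)
    {A : Set G} (hA : MemInvSemigroup gens (idOn A)) :
    MemInvSemigroup gens (idOn (SetRel.preimage φ A)) :=
  idOn_image hgens (.inv _ hφ) hA

end MemInvSemigroup

theorem preimage_smul_eq_smul_comap {G H : Type*} [Group G] [Group H] (f : G →* H)
    (C : Subgroup H) {h : H} {k : G} (hk : f k ∈ h • (C : Set H)) :
    f ⁻¹' (h • (C : Set H)) = k • (C.comap f : Set G) := by
  have coset_eq : h • (C : Set H) = f k • (C : Set H) :=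
    (leftCoset_eq_iff C).2 ((mem_leftCoset_iff h).1 hk)
  ext x
  simp [coset_eq, mem_leftCoset_iff]

section AlgebraicAction

variable {S G : Type*} [Monoid S] [Group G] {σ : S →* Monoid.End G}

/-- The collection `ℰ` of `S`-constructible cosets, together with the empty set. -/
def constructibleCosets (σ : S →* Monoid.End G) : Set (Set G) :=
  {A | A = ∅ ∨ ∃ (g : G) (C : Subgroup G), IsConstructible σ C ∧ A = g • (C : Set G)}

theorem univ_mem_constructibleCosets : Set.univ ∈ constructibleCosets σ :=
  .inr ⟨1, ⊤, .top, by simp⟩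

theorem smul_mem_constructibleCosets (g : G) {A : Set G} (hA : A ∈ constructibleCosets σ) :
    g • A ∈ constructibleCosets σ := by
  rcases hA with rfl | ⟨k, C, hC, rfl⟩
  · exact .inl Set.smul_set_empty
  · exact .inr ⟨g * k, C, hC, smul_smul g k _⟩

theorem image_mem_constructibleCosets (s : S) {A : Set G} (hA : A ∈ constructibleCosets σ) :
    σ s '' A ∈ constructibleCosets σ := by
  rcases hA with rfl | ⟨g, C, hC, rfl⟩
  · exact .inl (Set.image_empty _)
  · exact .inr ⟨σ s g, C.map (σ s), hC.map s, Set.image_smul_distrib (σ s) g _⟩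

theorem preimage_mem_constructibleCosets (s : S) {A : Set G} (hA : A ∈ constructibleCosets σ) :
    σ s ⁻¹' A ∈ constructibleCosets σ := by
  rcases hA with rfl | ⟨g, C, hC, rfl⟩
  · exact .inl Set.preimage_empty
  · rcases (σ s ⁻¹' (g • (C : Set G))).eq_empty_or_nonempty with hempty | ⟨k, hk⟩
    · exact .inl hempty
    · exact .inr ⟨k, C.comap (σ s), hC.comap s, preimage_smul_eq_smul_comap (σ s) C hk⟩

namespace memI

theorem endomorphism (σ : S →* Monoid.End G) (s : S) : memI σ (grph (σ s)) :=
  .base _ (.inl ⟨s, rfl⟩)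

theorem translation (σ : S →* Monoid.End G) (g : G) : memI σ (grph (g * ·)) :=
  .base _ (.inr ⟨g, rfl⟩)

theorem rdom_mem_constructibleCosets {φ : Set (G × G)} (hφ : memI σ φ) :
    rdom φ ∈ constructibleCosets σ := by
  have preserves := MemInvSemigroup.mapsTo_image_and_preimage (E := constructibleCosets σ) ?_ hφ
  · have rdom_eq : SetRel.preimage φ Set.univ = rdom φ := SetRel.preimage_univ_right
    exact rdom_eq ▸ preserves.2 univ_mem_constructibleCosets
  · rintro _ (⟨s, rfl⟩ | ⟨g, rfl⟩)
    · refine ⟨fun A hA => ?_, fun A hA => ?_⟩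
      · exact image_grph (σ s) A ▸ image_mem_constructibleCosets s hA
      · exact preimage_grph (σ s) A ▸ preimage_mem_constructibleCosets s hA
    · refine ⟨fun A hA => ?_, fun A hA => ?_⟩
      · exact image_grph (g * ·) A ▸ smul_mem_constructibleCosets g hA
      · rw [preimage_grph]
        exact Set.preimage_smul g A ▸ smul_mem_constructibleCosets g⁻¹ hA

theorem isPartialBijection_of_mem_generators (hinj : ∀ s : S, Function.Injective (σ s)) :
    ∀ ψ ∈ {φ : Set (G × G) | ∃ s : S, φ = grph (σ s : G → G)} ∪
      {φ | ∃ g : G, φ = grph (fun h : G => g * h)}, IsPartialBijection ψ := by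
  rintro _ (⟨s, rfl⟩ | ⟨g, rfl⟩)
  · exact isPartialBijection_grph (hinj s)
  · exact isPartialBijection_grph (mul_right_injective g)

theorem isPartialBijection (hinj : ∀ s : S, Function.Injective (σ s)) {φ : Set (G × G)}
    (hφ : memI σ φ) : IsPartialBijection φ :=
  MemInvSemigroup.isPartialBijection (isPartialBijection_of_mem_generators hinj) hφ

theorem idOn_image (hinj : ∀ s : S, Function.Injective (σ s)) {f : G → G}
    (hf : memI σ (grph f)) {A : Set G} (hA : memI σ (idOn A)) : memI σ (idOn (f '' A)) :=
  image_grph f A ▸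
    MemInvSemigroup.idOn_image (isPartialBijection_of_mem_generators hinj) hf hA

theorem idOn_preimage (hinj : ∀ s : S, Function.Injective (σ s)) {f : G → G}
    (hf : memI σ (grph f)) {A : Set G} (hA : memI σ (idOn A)) : memI σ (idOn (f ⁻¹' A)) :=
  preimage_grph f A ▸
    MemInvSemigroup.idOn_preimage (isPartialBijection_of_mem_generators hinj) hf hA

theorem idOn_of_isConstructible (hinj : ∀ s : S, Function.Injective (σ s)) {C : Subgroup G}
    (hC : IsConstructible σ C) : memI σ (idOn (C : Set G)) := by
  induction hC with
  | top =>
    rw [Subgroup.coe_top, idOn_univ, ← one_mul_eq_id]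
    exact translation σ 1
  | map s C _ ih => exact idOn_image hinj (endomorphism σ s) ih
  | comap s C _ ih => exact idOn_preimage hinj (endomorphism σ s) ih

theorem idOn_smul (hinj : ∀ s : S, Function.Injective (σ s)) (g : G) {C : Subgroup G}
    (hC : IsConstructible σ C) : memI σ (idOn (g • (C : Set G))) :=
  idOn_image hinj (translation σ g) (idOn_of_isConstructible hinj hC)

theorem empty (hinj : ∀ s : S, Function.Injective (σ s))
    (hna : ∃ s : S, Set.range (σ s : G → G) ≠ Set.univ) : memI σ ∅ := by
  obtain ⟨s, hs⟩ := hna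
  obtain ⟨g, hg⟩ := (Set.ne_univ_iff_exists_notMem _).1 hs
  let R : Subgroup G := Subgroup.map (σ s) ⊤
  have hR : IsConstructible σ R := .map s ⊤ .top
  have hgR : g ∉ R := fun ⟨x, _, hx⟩ => hg ⟨x, hx⟩
  have hne : g • (R : Set G) ≠ R := fun h => hgR (h.subset (mem_own_leftCoset R.toSubmonoid g))
  have hdisj : g • (R : Set G) ∩ R = ∅ :=
    (MulAction.isBlock_subgroup.smul_eq_or_disjoint g).resolve_left hne |>.inter_eq
  rw [← idOn_empty, ← hdisj, ← rcomp_idOn_idOn]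
  exact .comp _ _ (idOn_smul hinj g hR) (idOn_of_isConstructible hinj hR)

end memI

end AlgebraicAction

theorem idempotents_of_I_general {S G : Type*} [Monoid S] [Group G]
    (σ : S →* Monoid.End G)
    (hinj : ∀ s : S, Function.Injective (σ s))
    (hna : ∃ s : S, Set.range (σ s : G → G) ≠ Set.univ) :
    {φ : Set (G × G) | memI σ φ ∧ rcomp φ φ = φ} =
      {φ : Set (G × G) | φ = (∅ : Set (G × G)) ∨
        ∃ (g : G) (C : Subgroup G), IsConstructible σ C ∧ φ = idOn (g • (C : Set G))} := by
  ext φ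
  constructor
  · rintro ⟨hφ, hidem⟩
    have hφ_eq : φ = idOn (rdom φ) := (hφ.isPartialBijection hinj).eq_idOn_rdom hidem
    rcases hφ.rdom_mem_constructibleCosets with hdom | ⟨g, C, hC, hdom⟩
    · exact .inl (by rw [hφ_eq, hdom, idOn_empty])
    · exact .inr ⟨g, C, hC, hdom ▸ hφ_eq⟩
  · rintro (rfl | ⟨g, C, hC, rfl⟩)
    · exact ⟨.empty hinj hna, rcomp_empty ∅⟩
    · exact ⟨.idOn_smul hinj g hC, by rw [rcomp_idOn_idOn, Set.inter_self]⟩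

/-- The idempotents of `I` are exactly the identity maps on the `S`-constructible
cosets, together with the empty partial bijection. -/
theorem idempotents_of_I {S G : Type*} [Monoid S] [Group G] [Nontrivial G]
    (σ : S →* Monoid.End G)
    (hinj : ∀ s : S, Function.Injective (σ s))
    (hfaith : Function.Injective σ)
    (hna : ∃ s : S, Set.range (σ s : G → G) ≠ Set.univ) :
    {φ : Set (G × G) | memI σ φ ∧ rcomp φ φ = φ} =
      {φ : Set (G × G) | φ = (∅ : Set (G × G)) ∨
        ∃ (g : G) (C : Subgroup G), IsConstructible σ C ∧ φ = idOn (g • (C : Set G))} :=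
  idempotents_of_I_general σ hinj hna
end

section
/- Let σ: S ↷ G be an algebraic action. Then I is 0-E-unitary if and only if I^e is E-unitary. Explicitly: the condition that every φ ∈ I, for which there exists a nonempty S-constructible coset kD with kD ⊆ dom(φ) and φ|_{kD} = id_{kD}, satisfies φ = id_{dom(φ)}, holds if and only if every φ ∈ I^e, for which there exists C ∈ 𝒞 with C ⊆ dom(φ) and φ|_C = id_C, satisfies φ = id_{dom(φ)}. -/
open scoped Pointwise

/-- The inverse semigroup `I^e` generated by the endomorphisms `σ_s` alone. -/
def memIe {S G : Type*} [Monoid S] [Group G] (σ : S →* Monoid.End G) :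
    Set (G × G) → Prop :=
  MemInvSemigroup {φ | ∃ s : S, φ = grph (σ s : G → G)}

/-! The elements of `I` are affine maps and those of `I^e` their linear parts. Viewed as a subset of
`G × G`, a nonempty `φ ∈ I` is a left coset of a subgroup `ψ ∈ I^e`: if `φ a = b` then
`φ = (a, b) • ψ`, which is the graph of `t_b ∘ ψ ∘ t_a⁻¹`. If `φ` fixes `kD` pointwise, then
`(k, k) ∈ φ`, so `φ = (k, k) • ψ` is the conjugate of `ψ` by `t_k`. Conjugating back, `ψ` fixes `D`
pointwise, and `φ` is an identity as soon as `ψ` is. -/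

theorem MemInvSemigroup.mono {G : Type*} {gens gens' : Set (Set (G × G))} (h : gens ⊆ gens')
    {φ : Set (G × G)} (hφ : MemInvSemigroup gens φ) : MemInvSemigroup gens' φ := by
  induction hφ with
  | base φ hφ => exact .base φ (h hφ)
  | comp φ ψ _ _ ihφ ihψ => exact .comp φ ψ ihφ ihψ
  | inv φ _ ih => exact .inv φ ih

section Mul

variable {G : Type*} [Mul G]

theorem smul_idOn (k : G) (A : Set G) : (k, k) • idOn A = idOn (k • A) := by
  ext ⟨x, y⟩
  constructor
  · rintro ⟨⟨u, v⟩, ⟨huv : u = v, hu⟩, hxy⟩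
    obtain ⟨rfl, rfl⟩ := Prod.mk.inj hxy
    exact ⟨congrArg (k * ·) huv, u, hu, rfl⟩
  · rintro ⟨hxy : x = y, u, hu, hx⟩
    exact ⟨(u, u), ⟨rfl, hu⟩, Prod.ext hx (hx.trans hxy)⟩

theorem rdom_smul (a b : G) (ψ : Set (G × G)) : rdom ((a, b) • ψ) = a • rdom ψ := by
  ext x
  constructor
  · rintro ⟨_, ⟨u, v⟩, huv, hxy⟩
    exact ⟨u, ⟨v, huv⟩, congrArg Prod.fst hxy⟩
  · rintro ⟨u, ⟨v, huv⟩, rfl⟩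
    exact ⟨b * v, (u, v), huv, rfl⟩

theorem rinv_smul (a b : G) (ψ : Set (G × G)) : rinv ((a, b) • ψ) = (b, a) • rinv ψ := by
  ext ⟨x, y⟩
  constructor <;> rintro ⟨⟨u, v⟩, huv, hxy⟩ <;>
    exact ⟨(v, u), huv, congrArg Prod.swap hxy⟩

theorem rcomp_smul [IsLeftCancelMul G] (a b c : G) (φ ψ : Set (G × G)) :
    rcomp ((b, c) • φ) ((a, b) • ψ) = (a, c) • rcomp φ ψ := by
  ext ⟨x, z⟩
  constructor
  · rintro ⟨y, ⟨⟨u, v⟩, huv, hxy⟩, ⟨v', w⟩, hvw, hyz⟩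
    obtain ⟨rfl, rfl⟩ := Prod.mk.inj hxy
    obtain ⟨hv : b * v' = b * v, rfl⟩ := Prod.mk.inj hyz
    obtain rfl := mul_left_cancel hv
    exact ⟨(u, w), ⟨v', huv, hvw⟩, rfl⟩
  · rintro ⟨⟨u, w⟩, ⟨v, huv, hvw⟩, hxz⟩
    obtain ⟨rfl, rfl⟩ := Prod.mk.inj hxz
    exact ⟨b * v, ⟨(u, v), huv, rfl⟩, (v, w), hvw, rfl⟩

/-- `ψ` is the linear part of the affine partial map `φ`: whenever `φ` sends `a` to `b`, it equals
`t_b ∘ ψ ∘ t_a⁻¹`, whose graph is `(a, b) • ψ`. The empty map has every `ψ` as a linear part. -/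
def IsLinearPart (ψ φ : Set (G × G)) : Prop :=
  ∀ p ∈ φ, φ = p • ψ

namespace IsLinearPart

theorem rinv {ψ φ : Set (G × G)} (h : IsLinearPart ψ φ) : IsLinearPart (rinv ψ) (rinv φ) := by
  rintro ⟨b, a⟩ (hab : (a, b) ∈ φ)
  rw [← rinv_smul, ← h _ hab]

theorem rcomp [IsLeftCancelMul G] {ψ₁ φ₁ ψ₂ φ₂ : Set (G × G)} (h₁ : IsLinearPart ψ₁ φ₁)
    (h₂ : IsLinearPart ψ₂ φ₂) : IsLinearPart (rcomp ψ₁ ψ₂) (rcomp φ₁ φ₂) := by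
  rintro ⟨a, c⟩ ⟨b, hab, hbc⟩
  rw [← rcomp_smul a b c, ← h₁ _ hbc, ← h₂ _ hab]

end IsLinearPart

end Mul

section Group

variable {G : Type*} [Group G]

theorem isLinearPart_grph (f : Monoid.End G) : IsLinearPart (grph f) (grph f) := by
  rintro ⟨a, b⟩ (rfl : b = f a)
  ext ⟨x, y⟩
  simp [grph, Set.mem_smul_set_iff_inv_smul_mem]

theorem isLinearPart_grph_mul_left (g : G) :
    IsLinearPart (grph (1 : Monoid.End G)) (grph (g * ·)) := by
  rintro ⟨a, b⟩ (rfl : b = g * a)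
  ext ⟨x, y⟩
  simp [grph, Set.mem_smul_set_iff_inv_smul_mem, inv_mul_eq_iff_eq_mul, mul_assoc]

end Group

section Action

variable {S G : Type*} [Monoid S] [Group G] {σ : S →* Monoid.End G} {φ : Set (G × G)}

theorem memI_of_memIe (hφ : memIe σ φ) : memI σ φ :=
  hφ.mono Set.subset_union_left

theorem exists_memIe_isLinearPart (hφ : memI σ φ) : ∃ ψ, memIe σ ψ ∧ IsLinearPart ψ φ := by
  induction hφ with
  | base φ hφ =>
    obtain ⟨s, rfl⟩ | ⟨g, rfl⟩ := hφ
    · exact ⟨_, .base _ ⟨s, rfl⟩, isLinearPart_grph (σ s)⟩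
    · exact ⟨_, .base _ ⟨1, by rw [map_one]⟩, isLinearPart_grph_mul_left g⟩
  | comp _ _ _ _ ih₁ ih₂ =>
    obtain ⟨_, hψ₁, hlin₁⟩ := ih₁
    obtain ⟨_, hψ₂, hlin₂⟩ := ih₂
    exact ⟨_, .comp _ _ hψ₁ hψ₂, hlin₁.rcomp hlin₂⟩
  | inv _ _ ih =>
    obtain ⟨_, hψ, hlin⟩ := ih
    exact ⟨_, .inv _ hψ, hlin.rinv⟩

end Action

theorem zero_E_unitary_iff_E_unitary_general {S G : Type*} [Monoid S] [Group G]
    (σ : S →* Monoid.End G) (𝒞 : Set (Subgroup G)) :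
    (∀ φ : Set (G × G), memI σ φ →
        (∃ (k : G) (D : Subgroup G), D ∈ 𝒞 ∧ idOn (k • (D : Set G)) ⊆ φ) →
        φ = idOn (rdom φ)) ↔
      (∀ φ : Set (G × G), memIe σ φ →
        (∃ C : Subgroup G, C ∈ 𝒞 ∧ idOn (C : Set G) ⊆ φ) →
        φ = idOn (rdom φ)) := by
  constructor
  · rintro hI φ hφ ⟨C, hC, hid⟩
    exact hI φ (memI_of_memIe hφ) ⟨1, C, hC, by rwa [one_smul]⟩
  · rintro hIe φ hφ ⟨k, D, hD, hid⟩
    obtain ⟨ψ, hψ, hlin⟩ := exists_memIe_isLinearPart hφ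
    have hk : (k, k) ∈ φ := hid ⟨rfl, 1, D.one_mem, mul_one k⟩
    obtain rfl : φ = (k, k) • ψ := hlin _ hk
    have hid' : idOn (D : Set G) ⊆ ψ := by
      rwa [← smul_idOn, Set.smul_set_subset_smul_set_iff] at hid
    have hψid : ψ = idOn (rdom ψ) := hIe ψ hψ ⟨D, hD, hid'⟩
    calc (k, k) • ψ = (k, k) • idOn (rdom ψ) := congrArg _ hψid
      _ = idOn (rdom ((k, k) • ψ)) := by rw [smul_idOn, rdom_smul]

/-- Corollary 2.12 (cor:0Eunitary): `I` is 0-E-unitary if and only if `I^e` is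
E-unitary. Here `I` is 0-E-unitary means: any `φ ∈ I` which restricts to the
identity on some nonempty constructible coset `kD` is the identity on its
domain; `I^e` is E-unitary means the analogous statement for `φ ∈ I^e` and
constructible subgroups `C ∈ 𝒞`. -/
theorem zero_E_unitary_iff_E_unitary {S G : Type*} [Monoid S] [Group G] [Nontrivial G]
    (σ : S →* Monoid.End G)
    (hinj : ∀ s : S, Function.Injective (σ s))
    (hfaith : Function.Injective σ) :
    (∀ φ : Set (G × G), memI σ φ →
        (∃ (k : G) (D : Subgroup G), IsConstructible σ D ∧ idOn (k • (D : Set G)) ⊆ φ) →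
        φ = idOn (rdom φ)) ↔
      (∀ φ : Set (G × G), memIe σ φ →
        (∃ C : Subgroup G, IsConstructible σ C ∧ idOn ((C : Subgroup G) : Set G) ⊆ φ) →
        φ = idOn (rdom φ)) := by
  exact zero_E_unitary_iff_E_unitary_general σ {C | IsConstructible σ C}
end

section
/- Let σ: S ↷ G be a non-automorphic algebraic action and let φ ∈ I have nonempty domain. A finite collection 𝔠 = {h₁D₁, …, h_nD_n} ⊆ ℰ× is an outer cover of 𝒥_φ if and only if ∪𝒥_φ ⊆ h₁D₁ ∪ ⋯ ∪ h_nD_n. In particular, a finite collection 𝔠 = {h₁D₁, …, h_nD_n} ⊆ ℰ× is a cover of the S-constructible coset gC if and only if gC = h₁D₁ ∪ ⋯ ∪ h_nD_n. -/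
open scoped Pointwise

/-- The fixed-point set of a partial bijection. -/
def fixSet {G : Type*} (φ : Set (G × G)) : Set G := {x | (x, x) ∈ φ}

/-!
Intersections of constructible subgroups are constructible, so given a point `x` of a constructible
coset `E` there is a constructible subgroup `C'`, contained in every `Dᵢ`, with `x C' ⊆ E`. If
the cosets `hᵢDᵢ` form an outer cover, some `hᵢDᵢ` meets `x C'`, and since `C' ≤ Dᵢ` this forces
`x ∈ hᵢDᵢ`.
-/

theorem map_inf_eq_map_inf_comap {G H : Type*} [Group G] [Group H] (f : G →* H)
    (C : Subgroup G) (D : Subgroup H) : C.map f ⊓ D = (C ⊓ D.comap f).map f :=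
  SetLike.coe_injective (Set.image_inter_preimage f C D).symm

theorem comap_inf_eq_comap_inf_map {G H : Type*} [Group G] [Group H] {f : G →* H}
    (hf : Function.Injective f) (C : Subgroup H) (D : Subgroup G) :
    C.comap f ⊓ D = (C ⊓ D.map f).comap f := by
  rw [Subgroup.comap_inf, D.comap_map_eq_self_of_injective hf]

theorem infClosed_setOf_isConstructible {S G : Type*} [Monoid S] [Group G]
    {σ : S →* Monoid.End G} (hinj : ∀ s, Function.Injective (σ s)) :
    InfClosed {C | IsConstructible σ C} := by
  intro C hC
  induction hC with
  | top => exact fun D hD ↦ by rwa [top_inf_eq]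
  | map s C _ ih =>
    exact fun D hD ↦ Set.mem_of_eq_of_mem (map_inf_eq_map_inf_comap (σ s) C D)
      (.map s _ (ih (.comap s D hD)))
  | comap s C _ ih =>
    exact fun D hD ↦ Set.mem_of_eq_of_mem (comap_inf_eq_comap_inf_map (hinj s) C D)
      (.comap s _ (ih (.map s D hD)))

theorem exists_mem_le_forall_le {α ι : Type*} [Preorder α] [Finite ι] {A : Set α}
    (hA : DirectedOn (· ≥ ·) A) {a : α} (ha : a ∈ A) {b : ι → α} (hb : ∀ i, b i ∈ A) :
    ∃ c ∈ A, c ≤ a ∧ ∀ i, c ≤ b i := by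
  have : Nonempty A := ⟨⟨a, ha⟩⟩
  obtain ⟨⟨c, hc⟩, hle⟩ := hA.directed_val.finite_le
    fun o : Option ι ↦ o.elim ⟨a, ha⟩ fun i ↦ ⟨b i, hb i⟩
  exact ⟨c, hc, hle none, fun i ↦ hle (some i)⟩

section DirectedFamily

variable {G : Type*} [Group G]

theorem leftCoset_inter_nonempty_iff_mem {C D : Subgroup G} (hCD : C ≤ D) (h x : G) :
    (h • (D : Set G) ∩ x • (C : Set G)).Nonempty ↔ x ∈ h • (D : Set G) := by
  refine ⟨?_, fun hx ↦ ⟨x, hx, mem_own_leftCoset C.toSubmonoid x⟩⟩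
  rintro ⟨_, hy, c, hc, rfl⟩
  rw [mem_leftCoset_iff] at hy ⊢
  exact (D.mul_mem_cancel_right (hCD hc)).1
    (by simpa only [smul_eq_mul, mul_assoc, SetLike.mem_coe] using hy)

/-- The left cosets of members of a family `𝒞` of subgroups that are contained in a set `F`. For
the constructible subgroups and `F = fixSet φ` these are the nonempty members of `𝒥_φ`. -/
def cosetsWithin (𝒞 : Set (Subgroup G)) (F : Set G) : Set (Set G) :=
  {E | ∃ (g : G) (C : Subgroup G), C ∈ 𝒞 ∧ E = g • (C : Set G) ∧ E ⊆ F}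

theorem forall_mem_cosetsWithin {𝒞 : Set (Subgroup G)} {F : Set G} {p : Set G → Prop} :
    (∀ E ∈ cosetsWithin 𝒞 F, p E) ↔
      ∀ (g : G) (C : Subgroup G), C ∈ 𝒞 → g • (C : Set G) ⊆ F → p (g • (C : Set G)) :=
  ⟨fun H g C hC hF ↦ H _ ⟨g, C, hC, rfl, hF⟩, by rintro H _ ⟨g, C, hC, rfl, hF⟩; exact H g C hC hF⟩

theorem nonempty_of_mem_cosetsWithin {𝒞 : Set (Subgroup G)} {F E : Set G}
    (hE : E ∈ cosetsWithin 𝒞 F) : E.Nonempty := by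
  obtain ⟨g, C, -, rfl, -⟩ := hE
  exact (OneMemClass.coe_nonempty C).smul_set

theorem sUnion_cosetsWithin_leftCoset {𝒞 : Set (Subgroup G)} {C : Subgroup G} (hC : C ∈ 𝒞)
    (g : G) : ⋃₀ cosetsWithin 𝒞 (g • (C : Set G)) = g • (C : Set G) :=
  Set.Subset.antisymm (Set.sUnion_subset fun _ ⟨_, _, _, _, hE⟩ ↦ hE)
    (Set.subset_sUnion_of_mem ⟨g, C, hC, rfl, Set.Subset.rfl⟩)

variable {ι : Type*} [Finite ι] {𝒞 : Set (Subgroup G)} {D : ι → Subgroup G}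

theorem exists_mem_cosetsWithin_inter_nonempty_iff (h𝒞 : DirectedOn (· ≥ ·) 𝒞)
    (hD : ∀ i, D i ∈ 𝒞) {F E : Set G} (hE : E ∈ cosetsWithin 𝒞 F) {x : G} (hx : x ∈ E) :
    ∃ E' ∈ cosetsWithin 𝒞 F,
      ∀ i (h : G), (h • (D i : Set G) ∩ E').Nonempty ↔ x ∈ h • (D i : Set G) := by
  obtain ⟨g, C, hC, rfl, hF⟩ := hE
  obtain ⟨C', hC', hC'C, hC'D⟩ := exists_mem_le_forall_le h𝒞 hC hD
  have hxC : x • (C : Set G) = g • (C : Set G) :=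
    ((leftCoset_eq_iff C).2 ((mem_leftCoset_iff g).1 hx)).symm
  have hsub : x • (C' : Set G) ⊆ F :=
    (Set.smul_set_mono hC'C).trans (hxC.trans_subset hF)
  exact ⟨_, ⟨x, C', hC', rfl, hsub⟩, fun i h ↦ leftCoset_inter_nonempty_iff_mem (hC'D i) h x⟩

theorem forall_exists_inter_nonempty_iff_sUnion_subset (h𝒞 : DirectedOn (· ≥ ·) 𝒞)
    (hD : ∀ i, D i ∈ 𝒞) (h : ι → G) (F : Set G) :
    (∀ E ∈ cosetsWithin 𝒞 F, ∃ i, (h i • (D i : Set G) ∩ E).Nonempty) ↔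
      ⋃₀ cosetsWithin 𝒞 F ⊆ ⋃ i, h i • (D i : Set G) := by
  constructor
  · rintro hmeet x ⟨E, hE, hx⟩
    obtain ⟨E', hE', hmem⟩ := exists_mem_cosetsWithin_inter_nonempty_iff h𝒞 hD hE hx
    obtain ⟨i, hi⟩ := hmeet E' hE'
    exact Set.mem_iUnion.2 ⟨i, (hmem i (h i)).1 hi⟩
  · intro hsub E hE
    obtain ⟨x, hx⟩ := nonempty_of_mem_cosetsWithin hE
    obtain ⟨i, hi⟩ := Set.mem_iUnion.1 (hsub ⟨E, hE, hx⟩)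
    exact ⟨i, x, hi, hx⟩

theorem covers_eq_unions_general (h𝒞 : DirectedOn (· ≥ ·) 𝒞) (hD : ∀ i, D i ∈ 𝒞) (h : ι → G) :
    (∀ F : Set G,
      (∀ (g : G) (C : Subgroup G), C ∈ 𝒞 → g • (C : Set G) ⊆ F →
        ∃ i, (h i • (D i : Set G) ∩ g • (C : Set G)).Nonempty) ↔
      ⋃₀ cosetsWithin 𝒞 F ⊆ ⋃ i, h i • (D i : Set G)) ∧
    ∀ (g : G) (C : Subgroup G), C ∈ 𝒞 →
      (((∀ i, h i • (D i : Set G) ⊆ g • (C : Set G)) ∧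
        ∀ (g' : G) (C' : Subgroup G), C' ∈ 𝒞 → g' • (C' : Set G) ⊆ g • (C : Set G) →
          ∃ i, (h i • (D i : Set G) ∩ g' • (C' : Set G)).Nonempty) ↔
      g • (C : Set G) = ⋃ i, h i • (D i : Set G)) := by
  have houter (F : Set G) :=
    forall_mem_cosetsWithin.symm.trans
      (forall_exists_inter_nonempty_iff_sUnion_subset h𝒞 hD h F)
  refine ⟨houter, fun g C hC ↦ ?_⟩
  rw [houter, sUnion_cosetsWithin_leftCoset hC, Set.Subset.antisymm_iff, Set.iUnion_subset_iff,
    and_comm]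

end DirectedFamily

/-- Lemma 3.3 (lem:covers=unions): for `φ ∈ I` with nonempty domain, a finite
collection `{hᵢDᵢ} ⊆ ℰ×` is an outer cover of `𝒥_φ` iff `∪𝒥_φ ⊆ ⋃ᵢ hᵢDᵢ`;
in particular, it is a cover of a constructible coset `gC` iff `gC = ⋃ᵢ hᵢDᵢ`. -/
theorem covers_eq_unions {S G : Type*} [Monoid S] [Group G] [Nontrivial G]
    (σ : S →* Monoid.End G)
    (hinj : ∀ s : S, Function.Injective (σ s))
    (hfaith : Function.Injective σ)
    (hna : ∃ s : S, Set.range (σ s : G → G) ≠ Set.univ) :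
    -- outer covers of 𝒥_φ
    (∀ φ : Set (G × G), memI σ φ → (rdom φ).Nonempty →
      ∀ (n : ℕ) (h : Fin n → G) (D : Fin n → Subgroup G),
        (∀ i, IsConstructible σ (D i)) →
      ((∀ (g : G) (C : Subgroup G), IsConstructible σ C →
          g • (C : Set G) ⊆ fixSet φ →
          ∃ i, ((h i • (D i : Set G)) ∩ (g • (C : Set G))).Nonempty) ↔
        ⋃₀ {E : Set G | ∃ (g : G) (C : Subgroup G), IsConstructible σ C ∧
            E = g • (C : Set G) ∧ E ⊆ fixSet φ} ⊆ ⋃ i, h i • (D i : Set G))) ∧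
    -- covers of a constructible coset gC
    (∀ (g : G) (C : Subgroup G), IsConstructible σ C →
      ∀ (n : ℕ) (h : Fin n → G) (D : Fin n → Subgroup G),
        (∀ i, IsConstructible σ (D i)) →
      (((∀ i, h i • (D i : Set G) ⊆ g • (C : Set G)) ∧
        (∀ (g' : G) (C' : Subgroup G), IsConstructible σ C' →
          g' • (C' : Set G) ⊆ g • (C : Set G) →
          ∃ i, ((h i • (D i : Set G)) ∩ (g' • (C' : Set G))).Nonempty)) ↔
        g • (C : Set G) = ⋃ i, h i • (D i : Set G))) := by
  have h𝒞 := (infClosed_setOf_isConstructible hinj).codirectedOn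
  exact ⟨fun φ _ _ n h D hD ↦ (covers_eq_unions_general h𝒞 hD h).1 (fixSet φ),
    fun g C hC n h D hD ↦ (covers_eq_unions_general h𝒞 hD h).2 g C hC⟩
end

section
/- If S is left reversible, i.e. sS ∩ tS ≠ ∅ for all s, t ∈ S, then every algebraic action σ: S ↷ G satisfies condition (PC): for every C ∈ 𝒞 there exists s ∈ S with σ_s(G) ⊆ C. -/
open scoped Pointwise

section Range

variable {G H K L : Type*} [Group G] [Group H] [Group K] [Group L]

theorem range_comp_le_map {g : G →* H} {C : Subgroup H} (hC : g.range ≤ C) (f : H →* K) :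
    (f.comp g).range ≤ C.map f := by
  rw [MonoidHom.range_comp]
  exact Subgroup.map_mono hC

theorem range_le_comap_of_comp_eq_comp {f : H →* K} {g : L →* K} {u : G →* H} {v : G →* L}
    {C : Subgroup K} (h : f.comp u = g.comp v) (hC : g.range ≤ C) :
    u.range ≤ C.comap f := by
  rw [← Subgroup.map_le_iff_le_comap]
  calc
    u.range.map f = (f.comp u).range := MonoidHom.map_range f u
    _ = (g.comp v).range := by rw [h]
    _ = v.range.map g := MonoidHom.range_comp g v
    _ ≤ g.range := Subgroup.map_le_range g v.range
    _ ≤ C := hC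

end Range

theorem PC_of_left_reversible_general {S G : Type*} [Monoid S] [Group G]
    (σ : S →* Monoid.End G) (hrev : ∀ s t : S, ∃ u v : S, s * u = t * v)
    (C : Subgroup G) (hC : IsConstructible σ C) :
    ∃ s : S, MonoidHom.range (σ s) ≤ C := by
  induction hC with
  | top => exact ⟨1, le_top⟩
  | map s C _ ih =>
    obtain ⟨t, ht⟩ := ih
    refine ⟨s * t, ?_⟩
    rw [map_mul]
    exact range_comp_le_map ht (σ s)
  | comap s C _ ih =>
    obtain ⟨t, ht⟩ := ih
    obtain ⟨u, v, huv⟩ := hrev s t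
    have hσ : σ s * σ u = σ t * σ v := by rw [← map_mul, huv, map_mul]
    exact ⟨u, range_le_comap_of_comp_eq_comp hσ ht⟩

/-- Proposition 8.10 (prop:exactness4Sreversible): if `S` is left reversible
(`sS ∩ tS ≠ ∅` for all `s, t ∈ S`), then every algebraic action `σ : S ↷ G`
satisfies condition (PC): every constructible subgroup contains some `σ_s(G)`. -/
theorem PC_of_left_reversible {S G : Type*} [Monoid S] [Group G] [Nontrivial G]
    (σ : S →* Monoid.End G)
    (hinj : ∀ s : S, Function.Injective (σ s))
    (hfaith : Function.Injective σ)
    (hrev : ∀ s t : S, ∃ u v : S, s * u = t * v) :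
    ∀ C : Subgroup G, IsConstructible σ C →
      ∃ s : S, Set.range (σ s : G → G) ⊆ (C : Set G) :=
  PC_of_left_reversible_general σ hrev
end

section
/- Assume G is abelian, S is cancellative and right reversible (Ss ∩ St ≠ ∅ for all s, t ∈ S), and the algebraic action σ: S ↷ G is faithful and satisfies condition (PC): for every C ∈ 𝒞 there exists r ∈ S with σ_r(G) ⊆ C. Then for all C ∈ 𝒞 and all s, t ∈ S: if σ_s(g) = σ_t(g) for every g ∈ C, then s = t. (This is the condition characterizing property (JF) for the canonical globalization ⟨S⟩ ↷ S⁻¹G.) -/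
open scoped Pointwise

theorem eq_of_eqOn_of_range_subset {S M : Type*} [Monoid S] [MulOneClass M]
    {σ : S →* Monoid.End M} (hσ : Function.Injective σ) {r s t : S} (hr : IsRightRegular r)
    {A : Set M} (hA : Set.range (σ r) ⊆ A) (hst : Set.EqOn (σ s) (σ t) A) : s = t := by
  have hcomp : σ (s * r) = σ (t * r) := by
    ext x
    simpa only [map_mul, Monoid.End.coe_mul, Function.comp_apply] using hst (hA ⟨x, rfl⟩)
  exact hr (hσ hcomp)

theorem JF_of_right_reversible_general {S G : Type*} [Monoid S] [IsRightCancelMul S] [Group G]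
    {σ : S →* Monoid.End G} (hfaith : Function.Injective σ)
    (hPC : ∀ C : Subgroup G, IsConstructible σ C →
      ∃ r : S, Set.range (σ r : G → G) ⊆ (C : Set G)) :
    ∀ C : Subgroup G, IsConstructible σ C →
      ∀ s t : S, (∀ g ∈ C, σ s g = σ t g) → s = t := by
  intro C hC s t hst
  obtain ⟨r, hr⟩ := hPC C hC
  exact eq_of_eqOn_of_range_subset hfaith (IsRightRegular.all r) hr hst

/-- Corollary 8.14 (cor:(JF)4Sreversible): if `G` is abelian, `S` is cancellative
and right reversible, and the faithful algebraic action `σ : S ↷ G` satisfies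
(PC), then for every constructible subgroup `C` and all `s, t ∈ S`, agreement
of `σ_s` and `σ_t` on `C` forces `s = t` (the condition characterizing (JF) for
the canonical globalization). -/
theorem JF_of_right_reversible {S G : Type*} [Monoid S] [CommGroup G] [Nontrivial G]
    (σ : S →* Monoid.End G)
    (hinj : ∀ s : S, Function.Injective (σ s))
    (hfaith : Function.Injective σ)
    (hlc : ∀ a b c : S, a * b = a * c → b = c)
    (hrc : ∀ a b c : S, b * a = c * a → b = c)
    (hrev : ∀ s t : S, ∃ u v : S, u * s = v * t)
    (hPC : ∀ C : Subgroup G, IsConstructible σ C →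
      ∃ r : S, Set.range (σ r : G → G) ⊆ (C : Set G)) :
    ∀ C : Subgroup G, IsConstructible σ C →
      ∀ s t : S, (∀ g ∈ C, σ s g = σ t g) → s = t := by
  have : IsRightCancelMul S := ⟨hrc⟩
  exact JF_of_right_reversible_general hfaith hPC
end

section
/- Let R be a commutative Noetherian integral domain (with 0 ≠ 1) and S ⊆ R ∖ {0} a multiplicative submonoid containing 1. Then the algebraic action of S on the additive group (R, +) by the injective endomorphisms x ↦ ax (a ∈ S) is exact — since S is commutative, this means precisely that ⋂_{a ∈ S} aR = {0} — if and only if S contains a non-unit of R. -/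
/-!
The powers of a non-unit `a ∈ S` lie in `S`, so a nonzero element of `⋂ a ∈ S, aR` could be divided
by `a` indefinitely, and the successive quotients would generate an infinite strictly ascending
chain of principal ideals. If instead `S` consists of units, then each `aR` is all of `R`.
-/

theorem mem_iInter_range_mul_left_iff {M : Type*} [Semigroup M] {A : Set M} {y : M} :
    y ∈ ⋂ a ∈ A, Set.range (fun x : M => a * x) ↔ ∀ a ∈ A, a ∣ y := by
  simp only [Set.mem_iInter, Set.mem_range, dvd_def, eq_comm]

theorem iInter_range_mul_left_eq_univ {M : Type*} [Monoid M] {A : Set M}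
    (hA : ∀ a ∈ A, IsUnit a) : ⋂ a ∈ A, Set.range (fun x : M => a * x) = Set.univ :=
  Set.eq_univ_of_forall fun _ => mem_iInter_range_mul_left_iff.mpr fun a ha => (hA a ha).dvd

section

variable {M : Type*} [CommMonoidWithZero M] [IsCancelMulZero M] [WfDvdMonoid M]

theorem eq_zero_of_forall_pow_dvd {a y : M} (ha : ¬IsUnit a) (hy : ∀ n : ℕ, a ^ n ∣ y) :
    y = 0 := by
  by_contra hy₀
  exact FiniteMultiplicity.not_iff_forall.mpr hy (.of_not_isUnit ha hy₀)

theorem iInter_range_mul_left_eq_singleton_zero (S : Submonoid M) {a : M} (haS : a ∈ S)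
    (ha : ¬IsUnit a) : ⋂ b ∈ (S : Set M), Set.range (fun x : M => b * x) = {0} := by
  refine Set.eq_singleton_iff_unique_mem.mpr ⟨?_, fun y hy => ?_⟩
  · exact mem_iInter_range_mul_left_iff.mpr fun b _ => dvd_zero b
  · have hdvd : ∀ b ∈ S, b ∣ y := mem_iInter_range_mul_left_iff.mp hy
    exact eq_zero_of_forall_pow_dvd ha fun n => hdvd (a ^ n) (S.pow_mem haS n)

theorem domain_action_exact_iff_nonunit_general [Nontrivial M] (S : Submonoid M) :
    (⋂ a ∈ (S : Set M), Set.range (fun x : M => a * x)) = {0} ↔ ∃ a ∈ S, ¬IsUnit a := by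
  refine ⟨fun hexact => ?_, fun ⟨_, haS, ha⟩ => iInter_range_mul_left_eq_singleton_zero S haS ha⟩
  by_contra! hunits
  exact Set.singleton_ne_univ (0 : M) (hexact.symm.trans (iInter_range_mul_left_eq_univ hunits))

end

/-- Proposition 8.19 (prop:IDexact): for a Noetherian integral domain `R` and a
submonoid `S ⊆ R ∖ {0}`, the multiplication action `S ↷ (R, +)` is exact
(i.e. `⋂_{a ∈ S} aR = {0}`) if and only if `S` contains a non-unit. -/
theorem domain_action_exact_iff_nonunit {R : Type*} [CommRing R] [IsDomain R]
    [IsNoetherianRing R] (S : Submonoid R) (hS : ∀ a ∈ S, a ≠ (0 : R)) :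
    (⋂ a ∈ (S : Set R), Set.range (fun x : R => a * x)) = {0} ↔
      ∃ a ∈ S, ¬IsUnit a :=
  domain_action_exact_iff_nonunit_general S
end

section
/- Let R be a commutative Noetherian ring, M a finitely generated nonzero R-module, and S ⊆ R ∖ ⋃_{𝔭 ∈ Asc(M)} 𝔭 a multiplicative submonoid. Then the following are equivalent: (i) there exists a ∈ S such that ⋂_{n ≥ 0} aⁿM = 0 (i.e. the action of the submonoid {aⁿ : n ∈ ℕ} on M is exact); (ii) ⋂_{a ∈ S} aM = 0 (i.e. the action of S on M is exact); (iii) for every 𝔭 ∈ Asc(M), there exists a ∈ S whose image in the integral domain R/𝔭 is not a unit (i.e. the action of S on R/𝔭 is exact). -/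
/-!
For a single element `a`, Krull's intersection theorem shows that a nonzero `x ∈ ⋂ₙ aⁿM` is killed
by some `1 - b * a`; this zero divisor lies in an associated prime `𝔭`, so `a` is a unit modulo `𝔭`.
Conversely, exactness passes to the copy of `R ⧸ 𝔭` inside `M`, where units cannot act exactly.
Since `Asc(M)` is finite, a product of elements of `S`, one for each associated prime, is a nonunit
modulo all of them at once.
-/

/-- Exactness of the action of a monoid of scalars `S` on `M`: `⋂_{a ∈ S} aM = 0`, encoded as an
equality of sets so that it makes sense for any scalar action on a type with zero. -/
def IsExactAction {R : Type*} [Monoid R] (S : Submonoid R) (M : Type*) [Zero M] [SMul R M] :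
    Prop :=
  (⋂ a ∈ S, Set.range (fun x : M => a • x)) = {0}

namespace IsExactAction

section Monoid

variable {R M N F : Type*} [Monoid R] {S T : Submonoid R}

theorem iff_forall_eq_zero [Zero M] [SMulZeroClass R M] :
    IsExactAction S M ↔ ∀ x : M, (∀ a ∈ S, ∃ y, a • y = x) → x = 0 := by
  have zero_mem : (0 : M) ∈ ⋂ a ∈ S, Set.range (fun x : M => a • x) :=
    Set.mem_iInter₂.2 fun a _ => ⟨0, smul_zero a⟩
  simp only [IsExactAction, Set.eq_singleton_iff_unique_mem, zero_mem, true_and, Set.mem_iInter₂,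
    Set.mem_range]

theorem powers_iff [Zero M] [SMul R M] {a : R} :
    IsExactAction (Submonoid.powers a) M ↔
      (⋂ n : ℕ, Set.range (fun x : M => a ^ n • x)) = {0} := by
  have inter_eq : (⋂ b ∈ Submonoid.powers a, Set.range (fun x : M => b • x)) =
      ⋂ n : ℕ, Set.range (fun x : M => a ^ n • x) :=
    Set.biInter_range (f := (a ^ · : ℕ → R)) (g := fun b => Set.range (fun x : M => b • x))
  rw [IsExactAction, inter_eq]

theorem mono [Zero M] [SMulZeroClass R M] (hST : S ≤ T) (hS : IsExactAction S M) :
    IsExactAction T M :=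
  iff_forall_eq_zero.2 fun x hx => iff_forall_eq_zero.1 hS x fun a ha => hx a (hST ha)

theorem of_injective [AddMonoid M] [DistribMulAction R M] [AddMonoid N] [DistribMulAction R N]
    [FunLike F N M] [DistribMulActionHomClass F R N M] (f : F) (hf : Function.Injective f)
    (hM : IsExactAction S M) : IsExactAction S N := by
  refine iff_forall_eq_zero.2 fun x hx => hf ?_
  rw [map_zero]
  refine iff_forall_eq_zero.1 hM (f x) fun a ha => ?_
  obtain ⟨y, rfl⟩ := hx a ha
  exact ⟨f y, (map_smul f a y).symm⟩

end Monoid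

theorem exists_not_isUnit_algebraMap {R A : Type*} [CommSemiring R] [Semiring A] [Algebra R A]
    [Nontrivial A] {S : Submonoid R} (hA : IsExactAction S A) :
    ∃ a ∈ S, ¬IsUnit (algebraMap R A a) := by
  by_contra! hunit
  refine one_ne_zero (iff_forall_eq_zero.1 hA 1 fun a ha => ?_)
  obtain ⟨b, hb⟩ := (hunit a ha).exists_right_inv
  exact ⟨b, by rw [Algebra.smul_def, hb]⟩

end IsExactAction

theorem exists_mem_forall_not_isUnit {ι R : Type*} [Finite ι] [CommMonoid R]
    {A : ι → Type*} [∀ i, CommMonoid (A i)] (f : ∀ i, R →* A i) {S : Submonoid R}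
    (h : ∀ i, ∃ a ∈ S, ¬IsUnit (f i a)) : ∃ a ∈ S, ∀ i, ¬IsUnit (f i a) := by
  have := Fintype.ofFinite ι
  choose a haS ha using h
  refine ⟨∏ i, a i, S.prod_mem fun i _ => haS i, fun i hprod => ha i ?_⟩
  exact isUnit_of_dvd_unit (map_dvd (f i) (Finset.dvd_prod_of_mem a (Finset.mem_univ i))) hprod

section Noetherian

variable {R M : Type*} [CommRing R] [IsNoetherianRing R] [AddCommGroup M] [Module R M]
  {S : Submonoid R}

theorem IsExactAction.exists_not_isUnit_mk {p : Ideal R} (hM : IsExactAction S M)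
    (hp : p ∈ associatedPrimes R M) : ∃ a ∈ S, ¬IsUnit (Ideal.Quotient.mk p a) := by
  obtain ⟨_, f, hf⟩ := (isAssociatedPrime_iff_exists_injective_linearMap p M).1 hp
  exact (hM.of_injective f hf).exists_not_isUnit_algebraMap

theorem exists_isUnit_mk_of_mul_smul_eq_self {a b : R} {x : M} (hx : x ≠ 0)
    (hbx : (b * a) • x = x) : ∃ p ∈ associatedPrimes R M, IsUnit (Ideal.Quotient.mk p a) := by
  have zero_divisor : 1 - b * a ∈ ⋃ p ∈ associatedPrimes R M, (p : Set R) := by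
    rw [biUnion_associatedPrimes_eq_zero_divisors]
    exact ⟨x, hx, by rw [sub_smul, one_smul, hbx, sub_self]⟩
  obtain ⟨p, hp, hmem⟩ := Set.mem_iUnion₂.1 zero_divisor
  refine ⟨p, hp, IsUnit.of_mul_eq_one_right (Ideal.Quotient.mk p b) ?_⟩
  rw [← map_mul, ← map_one (Ideal.Quotient.mk p), eq_comm]
  exact Ideal.Quotient.eq.2 hmem

variable [Module.Finite R M]

theorem exists_mul_smul_eq_self_of_forall_pow_smul {a : R} {x : M}
    (hx : ∀ n : ℕ, ∃ y, a ^ n • y = x) : ∃ b : R, (b * a) • x = x := by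
  have mem_iInf : x ∈ (⨅ n : ℕ, Ideal.span {a} ^ n • ⊤ : Submodule R M) := by
    refine (Submodule.mem_iInf _).2 fun n => ?_
    obtain ⟨y, rfl⟩ := hx n
    exact Submodule.smul_mem_smul (Ideal.pow_mem_pow (Ideal.mem_span_singleton_self a) n)
      Submodule.mem_top
  obtain ⟨⟨r, hr⟩, hrx⟩ := (Ideal.mem_iInf_smul_pow_eq_bot_iff _ x).1 mem_iInf
  obtain ⟨b, rfl⟩ := Ideal.mem_span_singleton'.1 hr
  exact ⟨b, hrx⟩

theorem isExactAction_powers_of_forall_not_isUnit_mk {a : R}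
    (ha : ∀ p ∈ associatedPrimes R M, ¬IsUnit (Ideal.Quotient.mk p a)) :
    IsExactAction (Submonoid.powers a) M := by
  refine IsExactAction.iff_forall_eq_zero.2 fun x hx => by_contra fun hx0 => ?_
  obtain ⟨b, hb⟩ := exists_mul_smul_eq_self_of_forall_pow_smul fun n => hx (a ^ n) ⟨n, rfl⟩
  obtain ⟨p, hp, hunit⟩ := exists_isUnit_mk_of_mul_smul_eq_self hx0 hb
  exact ha p hp hunit

end Noetherian

theorem exactness_characterization_modules_general {R M : Type*} [CommRing R]
    [IsNoetherianRing R] [AddCommGroup M] [Module R M] [Module.Finite R M] (S : Submonoid R) :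
    List.TFAE [
      (∃ a ∈ S, (⋂ n : ℕ, Set.range (fun x : M => a ^ n • x)) = {0}),
      ((⋂ a ∈ (S : Set R), Set.range (fun x : M => a • x)) = {0}),
      (∀ p ∈ associatedPrimes R M, ∃ a ∈ S, ¬IsUnit (Ideal.Quotient.mk p a))] := by
  simp only [← IsExactAction.powers_iff]
  change List.TFAE [_, IsExactAction S M, _]
  tfae_have 1 → 2 := fun ⟨_, haS, ha⟩ => ha.mono (Submonoid.powers_le.2 haS)
  tfae_have 2 → 3 := fun hM _ hp => hM.exists_not_isUnit_mk hp
  tfae_have 3 → 1 := by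
    intro h
    have := (associatedPrimes.finite R M).to_subtype
    obtain ⟨a, haS, ha⟩ := exists_mem_forall_not_isUnit
      (fun p : associatedPrimes R M => (Ideal.Quotient.mk p.1 : R →* R ⧸ p.1))
      fun p => h p.1 p.2
    exact ⟨a, haS, isExactAction_powers_of_forall_not_isUnit_mk fun p hp => ha ⟨p, hp⟩⟩
  tfae_finish

/-- Proposition 8.24 (prop:Noetherexact): for a commutative Noetherian ring `R`,
a finitely generated nonzero `R`-module `M`, and a submonoid
`S ⊆ R ∖ ⋃_{𝔭 ∈ Asc(M)} 𝔭`, the following are equivalent: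
(i) some `a ∈ S` acts exactly on `M` (`⋂ₙ aⁿM = 0`);
(ii) the action of `S` on `M` is exact (`⋂_{a ∈ S} aM = 0`);
(iii) for every associated prime `𝔭` of `M` there is `a ∈ S` whose image in
`R/𝔭` is not a unit. -/
theorem exactness_characterization_modules {R M : Type*} [CommRing R]
    [IsNoetherianRing R] [AddCommGroup M] [Module R M] [Module.Finite R M]
    [Nontrivial M]
    (S : Submonoid R)
    (hS : ∀ a ∈ S, ∀ p ∈ associatedPrimes R M, a ∉ p) :
    List.TFAE [
      (∃ a ∈ S, (⋂ n : ℕ, Set.range (fun x : M => a ^ n • x)) = {0}),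
      ((⋂ a ∈ (S : Set R), Set.range (fun x : M => a • x)) = {0}),
      (∀ p ∈ associatedPrimes R M, ∃ a ∈ S, ¬IsUnit (Ideal.Quotient.mk p a))] :=
  exactness_characterization_modules_general S
end

section
/- Let S be a left cancellative monoid containing a non-invertible element and let Σ be a nontrivial group, and let σ: S ↷ ⊕_S Σ be the full S-shift. Then the family 𝒞 of S-constructible subgroups of ⊕_S Σ equals {⊕_X Σ : X ∈ 𝒥_S}, and the map 𝒥_S → 𝒞, X ↦ ⊕_X Σ, is an isomorphism of semilattices: it is a bijection satisfying ⊕_{X ∩ Y} Σ = (⊕_X Σ) ∩ (⊕_Y Σ) for all X, Y ∈ 𝒥_S. -/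
/-- The direct sum `⊕_S A`: the subgroup of the full product `S → A` consisting
of finitely supported elements. -/
def FinMulSupport (S A : Type*) [Group A] : Subgroup (S → A) where
  carrier := {x | (Function.mulSupport x).Finite}
  one_mem' := by simp
  mul_mem' := by
    intro x y hx hy
    exact (hx.union hy).subset (Function.mulSupport_mul x y)
  inv_mem' := by
    intro x hx
    simpa [Function.mulSupport_inv] using hx

open Classical in
/-- The shift `σ_s` on functions `S → A`:
`(σ_s x)_t = x_{s'}` if `t = s * s'` (with `s'` unique by left cancellation),
and `(σ_s x)_t = 1` otherwise. -/
noncomputable def shiftFun {S A : Type*} [Monoid S] [Group A] (s : S) (x : S → A) :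
    S → A :=
  fun t => if h : ∃ s' : S, t = s * s' then x h.choose else 1

/-- The full `S`-shift `σ_s` on `⊕_S A`. -/
noncomputable def shiftG {S A : Type*} [Monoid S] [Group A] (s : S)
    (x : FinMulSupport S A) : FinMulSupport S A :=
  ⟨shiftFun s (x : S → A), by
    apply Set.Finite.subset (Set.Finite.image (fun s' => s * s') x.2)
    intro t ht
    rw [Function.mem_mulSupport] at ht
    by_cases h : ∃ s' : S, t = s * s'
    · refine ⟨h.choose, ?_, h.choose_spec.symm⟩
      rw [Function.mem_mulSupport]
      intro h0
      apply ht
      simp only [shiftFun, dif_pos h, h0]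
    · exact absurd (by simp only [shiftFun, dif_neg h]) ht⟩

/-- The family of `S`-constructible subsets for an action given by functions
`f s : G → G`: smallest family containing `G` and closed under images and
preimages. (For the full shift these are exactly the constructible subgroups.) -/
inductive IsConstructibleSet {S G : Type*} (f : S → G → G) : Set G → Prop
  | univ : IsConstructibleSet f Set.univ
  | img : ∀ (s : S) (C : Set G), IsConstructibleSet f C → IsConstructibleSet f (f s '' C)
  | preimg : ∀ (s : S) (C : Set G), IsConstructibleSet f C →
      IsConstructibleSet f (f s ⁻¹' C)

/-- The family `𝒥_S` of constructible right ideals of `S`: smallest family of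
subsets of `S` containing `S` and closed under `X ↦ sX` and `X ↦ s⁻¹X`. -/
inductive IsConstructibleIdeal {S : Type*} [Monoid S] : Set S → Prop
  | univ : IsConstructibleIdeal Set.univ
  | smul : ∀ (s : S) (X : Set S), IsConstructibleIdeal X →
      IsConstructibleIdeal ((fun t => s * t) '' X)
  | presmul : ∀ (s : S) (X : Set S), IsConstructibleIdeal X →
      IsConstructibleIdeal ((fun t => s * t) ⁻¹' X)

/-- `⊕_X A` inside `⊕_S A`: elements supported on `X`. -/
def oplus {S : Type*} (A : Type*) [Group A] (X : Set S) : Set (FinMulSupport S A) :=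
  {x | ∀ t ∉ X, (x : S → A) t = 1}

/-!
On supports, the shift by a left regular element `s` acts as left translation:
`supp (σ_s x) = s · supp x`. Membership in `⊕_X A` is a condition on supports, so taking images
and preimages under `σ_s` corresponds to `X ↦ sX` and `X ↦ s⁻¹X`. The set `X` is recovered from
`⊕_X A` by testing functions supported at a single point.
-/

section Shift

variable {S A : Type*} [Monoid S] [Group A]

theorem coe_shiftG (s : S) (x : FinMulSupport S A) :
    (shiftG s x : S → A) = Function.extend (s * ·) (x : S → A) 1 := by
  funext t
  have hpred : (t = s * ·) = (s * · = t) := funext fun _ => propext eq_comm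
  simp only [shiftG, shiftFun, Function.extend, Pi.one_apply]
  rw [hpred]

theorem mulSupport_shiftG {s : S} (hs : IsLeftRegular s) (x : FinMulSupport S A) :
    Function.mulSupport (shiftG s x : S → A) =
      (s * ·) '' Function.mulSupport (x : S → A) := by
  rw [coe_shiftG, Function.mulSupport_extend_one hs]

end Shift

section Oplus

variable {S A : Type*} [Group A]

theorem mem_oplus_iff {X : Set S} {x : FinMulSupport S A} :
    x ∈ oplus A X ↔ Function.mulSupport (x : S → A) ⊆ X :=
  Function.mulSupport_subset_iff'.symm

theorem oplus_univ : oplus A (Set.univ : Set S) = Set.univ :=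
  Set.eq_univ_of_forall fun _ => mem_oplus_iff.2 (Set.subset_univ _)

theorem oplus_inter (X Y : Set S) : oplus A (X ∩ Y) = oplus A X ∩ oplus A Y := by
  ext x
  simp only [Set.mem_inter_iff, mem_oplus_iff, Set.subset_inter_iff]

theorem oplus_subset_oplus_iff [Nontrivial A] {X Y : Set S} :
    oplus A X ⊆ oplus A Y ↔ X ⊆ Y := by
  classical
  refine ⟨fun h t ht => ?_, fun h x hx => mem_oplus_iff.2 ((mem_oplus_iff.1 hx).trans h)⟩
  obtain ⟨a, ha⟩ := exists_ne (1 : A)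
  have hsupp : Function.mulSupport (Pi.mulSingle t a : S → A) = {t} :=
    Pi.mulSupport_mulSingle_of_ne ha
  let x : FinMulSupport S A :=
    ⟨Pi.mulSingle t a, (Set.finite_singleton t).subset hsupp.subset⟩
  have mem_oplus_iff_mem (Z : Set S) : x ∈ oplus A Z ↔ t ∈ Z := by
    rw [mem_oplus_iff, hsupp, Set.singleton_subset_iff]
  exact (mem_oplus_iff_mem Y).1 (h ((mem_oplus_iff_mem X).2 ht))

theorem oplus_injective [Nontrivial A] :
    Function.Injective (oplus A : Set S → Set (FinMulSupport S A)) := fun _ _ h =>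
  (oplus_subset_oplus_iff.1 h.subset).antisymm (oplus_subset_oplus_iff.1 h.superset)

end Oplus

section ShiftOplus

variable {S A : Type*} [Monoid S] [Group A] {s : S}

theorem shiftG_preimage_oplus (hs : IsLeftRegular s) (X : Set S) :
    shiftG s ⁻¹' oplus A X = oplus A ((s * ·) ⁻¹' X) := by
  ext x
  rw [Set.mem_preimage, mem_oplus_iff, mem_oplus_iff, mulSupport_shiftG hs, Set.image_subset_iff]

theorem range_shiftG (hs : IsLeftRegular s) :
    Set.range (shiftG s : FinMulSupport S A → FinMulSupport S A) =
      oplus A (Set.range (s * ·)) := by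
  refine Set.Subset.antisymm ?_ fun y hy => ?_
  · rintro _ ⟨x, rfl⟩
    rw [mem_oplus_iff, mulSupport_shiftG hs]
    exact Set.image_subset_range _ _
  · let x : FinMulSupport S A := ⟨fun t => (y : S → A) (s * t), y.2.preimage hs.injOn⟩
    refine ⟨x, Subtype.ext (funext fun t => ?_)⟩
    rw [coe_shiftG]
    by_cases ht : t ∈ Set.range (s * ·)
    · obtain ⟨u, rfl⟩ := ht
      exact hs.extend_apply _ _ u
    · exact (Function.extend_apply' _ _ t ht).trans (hy t ht).symm

theorem shiftG_image_oplus (hs : IsLeftRegular s) (X : Set S) :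
    shiftG s '' oplus A X = oplus A ((s * ·) '' X) := by
  have hsub : oplus A ((s * ·) '' X) ⊆ Set.range (shiftG s) := fun y hy => by
    rw [range_shiftG hs, mem_oplus_iff]
    exact (mem_oplus_iff.1 hy).trans (Set.image_subset_range _ _)
  calc
    shiftG s '' oplus A X = shiftG s '' oplus A ((s * ·) ⁻¹' ((s * ·) '' X)) := by
      rw [Set.preimage_image_eq X hs]
    _ = shiftG s '' (shiftG s ⁻¹' oplus A ((s * ·) '' X)) := by rw [shiftG_preimage_oplus hs]
    _ = oplus A ((s * ·) '' X) := Set.image_preimage_eq_of_subset hsub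

end ShiftOplus

section Constructible

variable {S A : Type*} [LeftCancelMonoid S] [Group A]

theorem IsConstructibleIdeal.isConstructibleSet_oplus {X : Set S}
    (hX : IsConstructibleIdeal X) :
    IsConstructibleSet (shiftG (S := S) (A := A)) (oplus A X) := by
  induction hX with
  | univ => rw [oplus_univ]; exact .univ
  | smul s X _ ih => rw [← shiftG_image_oplus (IsLeftRegular.all s)]; exact .img s _ ih
  | presmul s X _ ih => rw [← shiftG_preimage_oplus (IsLeftRegular.all s)]; exact .preimg s _ ih

theorem IsConstructibleSet.exists_eq_oplus {C : Set (FinMulSupport S A)}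
    (hC : IsConstructibleSet (shiftG (S := S) (A := A)) C) :
    ∃ X : Set S, IsConstructibleIdeal X ∧ C = oplus A X := by
  induction hC with
  | univ => exact ⟨_, .univ, oplus_univ.symm⟩
  | img s _ _ ih =>
    obtain ⟨X, hX, rfl⟩ := ih
    exact ⟨_, .smul s X hX, shiftG_image_oplus (IsLeftRegular.all s) X⟩
  | preimg s _ _ ih =>
    obtain ⟨X, hX, rfl⟩ := ih
    exact ⟨_, .presmul s X hX, shiftG_preimage_oplus (IsLeftRegular.all s) X⟩

end Constructible

/-- Proposition 9.2 (prop:Cforshift): for the full `S`-shift over a nontrivial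
group `A` (with `S` left cancellative containing a non-invertible element),
the constructible subgroups of `⊕_S A` are exactly the subgroups `⊕_X A` for
`X ∈ 𝒥_S`, and `X ↦ ⊕_X A` is an isomorphism of semilattices `𝒥_S ≅ 𝒞`. -/
theorem constructible_subgroups_of_full_shift {S A : Type*} [LeftCancelMonoid S]
    [Group A] [Nontrivial A] (hS : ∃ s : S, ¬IsUnit s) :
    ({C : Set (FinMulSupport S A) | IsConstructibleSet (shiftG (S := S) (A := A)) C} =
      {C | ∃ X : Set S, IsConstructibleIdeal X ∧ C = oplus A X}) ∧
    (∀ X Y : Set S, IsConstructibleIdeal X → IsConstructibleIdeal Y →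
      oplus A X = oplus A Y → X = Y) ∧
    (∀ X Y : Set S, IsConstructibleIdeal X → IsConstructibleIdeal Y →
      oplus A (X ∩ Y) = oplus A X ∩ oplus A Y) := by
  refine ⟨Set.ext fun C => ⟨IsConstructibleSet.exists_eq_oplus, ?_⟩,
    fun X Y _ _ h => oplus_injective h, fun X Y _ _ => oplus_inter X Y⟩
  rintro ⟨X, hX, rfl⟩
  exact hX.isConstructibleSet_oplus
end
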